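/- The core of the arboricity game Γ_G is nonempty if and only if the fractional arboricity of G equals its arboricity, i.e., a_f(G) = a(G). -/

import Mathlib

open scoped BigOperators

variable {V : Type*}

/-- Density of a subgraph: m(H)/(n(H)-1). -/
noncomputable def density (G : SimpleGraph V) (H : G.Subgraph) : ℝ :=
  (H.edgeSet.ncard : ℝ) / ((H.verts.ncard : ℝ) - 1)

/-- Fractional arboricity: maximum density over connected subgraphs. -/
noncomputable def fracArboricity (G : SimpleGraph V) : ℝ :=
  sSup {d : ℝ | ∃ H : G.Subgraph, H.Connected ∧ d = density G H}

/-- A densest subgraph: connected, attaining the maximum density. -/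
def IsDensest (G : SimpleGraph V) (H : G.Subgraph) : Prop :=
  H.Connected ∧ density G H = fracArboricity G

/-- A minimal densest subgraph: no proper subgraph is densest. -/
def IsMinimalDensest (G : SimpleGraph V) (H : G.Subgraph) : Prop :=
  IsDensest G H ∧ ∀ K : G.Subgraph, K < H → ¬ IsDensest G K
/-- A set of edges is a forest if the graph it spans is acyclic. -/
def IsForestEdgeSet (F : Set (Sym2 V)) : Prop :=
  (SimpleGraph.fromEdgeSet F).IsAcyclic

/-- Arboricity of an edge set: minimum number of forests covering it. -/
noncomputable def arboricity (S : Set (Sym2 V)) : ℕ :=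
  sInf {k : ℕ | ∃ F : Fin k → Set (Sym2 V),
    (∀ i, IsForestEdgeSet (F i)) ∧ S ⊆ ⋃ i, F i}

/-- A spanning tree of `G`, as a subgraph. -/
def IsSpanningTree (G : SimpleGraph V) (T : G.Subgraph) : Prop :=
  T.IsSpanning ∧ T.coe.IsTree

/-- Membership in the core of the arboricity game on `G`:
nonnegative, efficient, and no coalition pays more than its arboricity. -/
def inCore (G : SimpleGraph V) (x : Sym2 V → ℝ) : Prop :=
  (∀ e, 0 ≤ x e) ∧ (∑ᶠ e ∈ G.edgeSet, x e) = (arboricity G.edgeSet : ℝ) ∧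
    ∀ S : Set (Sym2 V), S ⊆ G.edgeSet → (∑ᶠ e ∈ S, x e) ≤ (arboricity S : ℝ)

theorem aux_ncard_induce (K : SimpleGraph V) (s : Set V) :
    Nat.card (K.induce s).edgeSet = {e | e ∈ K.edgeSet ∧ ∀ v ∈ e, v ∈ s}.ncard := by
  have h : {e | e ∈ K.edgeSet ∧ ∀ v ∈ e, v ∈ s} =
      (Sym2.map (Subtype.val : s → V)) '' (K.induce s).edgeSet := by
    ext e
    constructor
    · induction e using Sym2.ind with
      | _ a b =>
        rintro ⟨h1, h2⟩
        exact ⟨s(⟨a, h2 a (by simp)⟩, ⟨b, h2 b (by simp)⟩), by simpa using h1, by simp⟩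
    · rintro ⟨e', he', rfl⟩
      induction e' using Sym2.ind with
      | _ a b =>
        refine ⟨by simpa using he', ?_⟩
        intro v hv
        simp at hv
        rcases hv with rfl | rfl
        · exact a.2
        · exact b.2
  rw [h, Set.ncard_image_of_injective _ (Sym2.map.injective Subtype.val_injective)]
  rfl

theorem aux_forest_card [Finite V] (F : Set (Sym2 V)) (hF : IsForestEdgeSet F)
    (G : SimpleGraph V) (H : G.Subgraph) (hH : H.Connected) :
    (F ∩ H.edgeSet).ncard + 1 ≤ H.verts.ncard := by
  have : Nonempty H.verts := hH.nonempty.to_subtype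
  obtain ⟨T, hle, -, hT⟩ := (SimpleGraph.connected_top (V := H.verts)).exists_isTree_le_of_le_of_isAcyclic
    le_top (SimpleGraph.IsAcyclic.induce hF H.verts)
  have h1 := (SimpleGraph.isTree_iff_connected_and_card.1 hT).2
  have h2 : Nat.card ((SimpleGraph.fromEdgeSet F).induce H.verts).edgeSet ≤ Nat.card T.edgeSet :=
    Set.ncard_le_ncard (SimpleGraph.edgeSet_mono hle) (Set.toFinite _)
  rw [aux_ncard_induce] at h2
  have h3 : (F ∩ H.edgeSet).ncard ≤
      {e | e ∈ (SimpleGraph.fromEdgeSet F).edgeSet ∧ ∀ v ∈ e, v ∈ H.verts}.ncard := by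
    apply Set.ncard_le_ncard _ (Set.toFinite _)
    rintro e ⟨he1, he2⟩
    refine ⟨?_, fun v hv => H.mem_verts_of_mem_edge he2 hv⟩
    rw [SimpleGraph.edgeSet_fromEdgeSet]
    exact ⟨he1, G.not_isDiag_of_mem_edgeSet (H.edgeSet_subset he2)⟩
  have h4 : Nat.card H.verts = H.verts.ncard := rfl
  omega

theorem aux_arb_spec [Finite V] (S : Set (Sym2 V)) :
    ∃ F : Fin (arboricity S) → Set (Sym2 V),
      (∀ i, IsForestEdgeSet (F i)) ∧ S ⊆ ⋃ i, F i := by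
  apply Nat.sInf_mem (s := {k : ℕ | ∃ F : Fin k → Set (Sym2 V),
    (∀ i, IsForestEdgeSet (F i)) ∧ S ⊆ ⋃ i, F i})
  refine ⟨Nat.card (Sym2 V), fun i => {(Finite.equivFin (Sym2 V)).symm i}, ?_, ?_⟩
  · intro i
    beta_reduce
    generalize (Finite.equivFin (Sym2 V)).symm i = e
    induction e using Sym2.ind with
    | _ a b =>
      have := (SimpleGraph.isAcyclic_sup_fromEdgeSet_iff (G := (⊥ : SimpleGraph V)) (u := a) (v := b)).2
        ⟨SimpleGraph.isAcyclic_bot, fun h => Or.inl (by simpa using h)⟩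
      rw [bot_sup_eq] at this
      exact this
  · intro e _
    simp only [Set.mem_iUnion, Set.mem_singleton_iff]
    exact ⟨Finite.equivFin (Sym2 V) e, by simp⟩

theorem aux_arb_forest (F : Set (Sym2 V)) (hF : IsForestEdgeSet F) : arboricity F ≤ 1 :=
  Nat.sInf_le ⟨fun _ => F, fun _ => hF, fun e he => Set.mem_iUnion.2 ⟨0, he⟩⟩

theorem aux_finite [Finite V] (G : SimpleGraph V) :
    {d : ℝ | ∃ H : G.Subgraph, H.Connected ∧ d = density G H}.Finite := by
  apply (Set.finite_range (density G)).subset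
  rintro d ⟨H, -, rfl⟩
  exact ⟨H, rfl⟩

theorem aux_le_frac [Finite V] (G : SimpleGraph V) (H : G.Subgraph) (hH : H.Connected) :
    density G H ≤ fracArboricity G :=
  le_csSup (aux_finite G).bddAbove ⟨H, hH, rfl⟩

theorem aux_frac_mem [Finite V] (G : SimpleGraph V) (hG : G.Connected) :
    ∃ H : G.Subgraph, H.Connected ∧ fracArboricity G = density G H := by
  have hne : {d : ℝ | ∃ H : G.Subgraph, H.Connected ∧ d = density G H}.Nonempty := by
    obtain ⟨v⟩ := hG.nonempty
    exact ⟨_, G.singletonSubgraph v, SimpleGraph.Subgraph.singletonSubgraph_connected, rfl⟩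
  exact hne.csSup_mem (aux_finite G)

theorem aux_verts_pos [Finite V] (G : SimpleGraph V) (H : G.Subgraph) (hH : H.Connected) :
    1 ≤ H.verts.ncard :=
  (Set.ncard_pos (Set.toFinite _)).2 hH.nonempty

theorem aux_density_nonneg [Finite V] (G : SimpleGraph V) (H : G.Subgraph) (hH : H.Connected) :
    0 ≤ density G H := by
  have : (1 : ℝ) ≤ H.verts.ncard := by exact_mod_cast aux_verts_pos G H hH
  exact div_nonneg (by positivity) (by linarith)

theorem aux_frac_le_arb [Finite V] (G : SimpleGraph V) (hG : G.Connected) :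
    fracArboricity G ≤ arboricity G.edgeSet := by
  obtain ⟨H, hH, hd⟩ := aux_frac_mem G hG
  obtain ⟨F, hF, hc⟩ := aux_arb_spec G.edgeSet
  rw [hd, density]
  have h1 : (1 : ℝ) ≤ H.verts.ncard := by exact_mod_cast aux_verts_pos G H hH
  apply div_le_of_le_mul₀ (by linarith) (by positivity)
  have h2 : H.edgeSet = ⋃ i, (F i ∩ H.edgeSet) := by
    rw [← Set.iUnion_inter]
    exact (Set.inter_eq_right.2 (H.edgeSet_subset.trans hc)).symm
  have h3 : (H.edgeSet.ncard : ℝ) ≤ ∑ i, ((F i ∩ H.edgeSet).ncard : ℝ) := by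
    conv_lhs => rw [h2]
    exact_mod_cast Set.ncard_iUnion_le_of_fintype _
  refine h3.trans ((Finset.sum_le_card_nsmul _ _ ((H.verts.ncard : ℝ) - 1) ?_).trans ?_)
  · intro i _
    have := aux_forest_card (F i) (hF i) G H hH
    have : ((F i ∩ H.edgeSet).ncard : ℝ) + 1 ≤ H.verts.ncard := by exact_mod_cast this
    linarith
  · simp

theorem aux_span [Finite V] (G K F : SimpleGraph V) (hKG : K ≤ G) (hFK : F ≤ K)
    (hr : F.Reachable = K.Reachable) (h0 : 0 ≤ fracArboricity G) :
    (K.edgeSet.ncard : ℝ) ≤ fracArboricity G * F.edgeSet.ncard := by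
  classical
  have := Fintype.ofFinite V
  have := Fintype.ofFinite K.ConnectedComponent
  let φ : Sym2 V → K.ConnectedComponent := fun e => K.connectedComponentMk (Quot.out e).1
  have hφ : ∀ e ∈ K.edgeSet, ∀ c, φ e = c ↔ ∀ v ∈ e, v ∈ c.supp := by
    intro e he c
    have hm : (Quot.out e).1 ∈ e := Sym2.out_fst_mem e
    constructor
    · rintro rfl v hv
      rw [SimpleGraph.ConnectedComponent.mem_supp_iff, SimpleGraph.ConnectedComponent.eq]
      by_cases hvv : v = (Quot.out e).1
      · rw [hvv]
      · have : e = s(v, (Quot.out e).1) := (Sym2.mem_and_mem_iff hvv).1 ⟨hv, hm⟩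
        rw [this] at he
        exact SimpleGraph.Adj.reachable he
    · intro h
      exact h _ hm
  have key : ∀ L : SimpleGraph V, L ≤ K → (L.edgeSet.ncard : ℝ) =
      ∑ c : K.ConnectedComponent, (Nat.card (L.induce c.supp).edgeSet : ℝ) := by
    intro L hL
    rw [Set.ncard_eq_toFinset_card' L.edgeSet,
      Finset.card_eq_sum_card_fiberwise (f := φ) (t := Finset.univ) (by simp), Nat.cast_sum]
    refine Finset.sum_congr rfl fun c _ => ?_
    rw [aux_ncard_induce, ← Set.ncard_coe_finset]
    congr 2
    ext e
    simp only [Finset.coe_filter, Set.mem_toFinset, Set.mem_setOf_eq]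
    exact and_congr_right fun he => hφ e (SimpleGraph.edgeSet_mono hL he) c
  rw [key K le_rfl, key F hFK, Finset.mul_sum]
  refine Finset.sum_le_sum fun c _ => ?_
  have hFc : (F.induce c.supp).Connected := by
    induction c using SimpleGraph.ConnectedComponent.ind with
    | _ v =>
      have : (K.connectedComponentMk v).supp = (F.connectedComponentMk v).supp := by
        ext u
        simp only [SimpleGraph.ConnectedComponent.mem_supp_iff, SimpleGraph.ConnectedComponent.eq, hr]
      rw [this]
      exact (F.connectedComponentMk v).connected_toSimpleGraph
  have h1 := hFc.card_vert_le_card_edgeSet_add_one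
  have hKc : (K.induce c.supp).Connected := c.connected_toSimpleGraph
  let H : G.Subgraph := (SimpleGraph.toSubgraph K hKG).induce c.supp
  have hHcoe : H.coe = K.induce c.supp := by
    ext u v
    have hu := u.2
    have hv := v.2
    change _ ∈ c.supp at hu
    change _ ∈ c.supp at hv
    change (_ ∈ c.supp ∧ _ ∈ c.supp ∧ K.Adj u v) ↔ K.Adj u v
    tauto
  have hHc : H.Connected := ⟨by rw [hHcoe]; exact hKc⟩
  have hHe : H.edgeSet.ncard = Nat.card (K.induce c.supp).edgeSet := by
    rw [aux_ncard_induce]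
    congr 1
    ext e
    induction e using Sym2.ind with
    | _ a b =>
      change (_ ∈ c.supp ∧ _ ∈ c.supp ∧ K.Adj a b) ↔ _
      simp
      tauto
  have hHv : H.verts.ncard = Nat.card c.supp := rfl
  have hle := aux_le_frac G H hHc
  have hpos := aux_verts_pos G H hHc
  rw [density] at hle
  rw [← hHe]
  rw [← hHv] at h1
  have h1' : (H.verts.ncard : ℝ) - 1 ≤ Nat.card (F.induce c.supp).edgeSet := by
    have : (H.verts.ncard : ℝ) ≤ Nat.card (F.induce c.supp).edgeSet + 1 := by exact_mod_cast h1
    linarith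
  refine le_trans ?_ (mul_le_mul_of_nonneg_left h1' h0)
  rcases hpos.eq_or_lt with h | h
  · have : H.edgeSet = ∅ := by
      obtain ⟨w, hw⟩ := Set.ncard_eq_one.1 h.symm
      ext e
      induction e using Sym2.ind with
      | _ a b =>
        simp only [SimpleGraph.Subgraph.mem_edgeSet, Set.mem_empty_iff_false, iff_false]
        intro hab
        have ha := H.edge_vert hab
        have hb := H.edge_vert hab.symm
        rw [hw] at ha hb
        exact hab.ne (ha.trans hb.symm)
    rw [this, ← h]
    simp
  · have : (1 : ℝ) < H.verts.ncard := by exact_mod_cast h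
    rwa [div_le_iff₀ (by linarith)] at hle

theorem aux_greedy [Finite V] (G : SimpleGraph V) (h0 : 0 ≤ fracArboricity G) (n : ℕ) :
    ∀ (x : Sym2 V → ℝ) (S : Finset (Sym2 V)), S.card = n → ↑S ⊆ G.edgeSet →
      (∀ e ∈ S, 0 < x e) → ∃ F ⊆ S, IsForestEdgeSet (F : Set (Sym2 V)) ∧
        ∑ e ∈ S, x e ≤ fracArboricity G * ∑ e ∈ F, x e := by
  classical
  have := Fintype.ofFinite V
  induction n using Nat.strong_induction_on with
  | _ n ih =>
  intro x S hn hS hx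
  rcases S.eq_empty_or_nonempty with rfl | hne
  · exact ⟨∅, le_rfl, by simp [IsForestEdgeSet], by simp⟩
  obtain ⟨e₀, he₀, hmin⟩ := S.exists_min_image x hne
  set t := x e₀ with ht
  have htpos : 0 < t := hx e₀ he₀
  let S' := S.filter fun e => t < x e
  have hS' : S' ⊆ S := Finset.filter_subset _ _
  have hlt : S'.card < n := by
    rw [← hn]
    apply Finset.card_lt_card
    refine Finset.filter_ssubset.2 ⟨e₀, he₀, by simp [ht]⟩
  obtain ⟨F', hF'S, hF', hle⟩ := ih _ hlt (fun e => x e - t) S' rfl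
    ((Finset.coe_subset.2 hS').trans hS) (fun e he => by
      have := (Finset.mem_filter.1 he).2
      linarith)
  have hnd : ∀ e ∈ S, ¬ e.IsDiag := fun e he => G.not_isDiag_of_mem_edgeSet (hS he)
  obtain ⟨T, hF'T, hTS, hT, hr⟩ :=
    SimpleGraph.exists_isAcyclic_reachable_eq_le_of_le_of_isAcyclic
      (G := SimpleGraph.fromEdgeSet (S : Set (Sym2 V)))
      (H := SimpleGraph.fromEdgeSet (F' : Set (Sym2 V)))
      (SimpleGraph.fromEdgeSet_mono (Finset.coe_subset.2 (hF'S.trans hS'))) hF'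
  have hSE : (SimpleGraph.fromEdgeSet (S : Set (Sym2 V))).edgeSet = S := by
    rw [SimpleGraph.edgeSet_fromEdgeSet]
    ext e
    simp only [Set.mem_diff, Finset.mem_coe]
    exact ⟨fun h => h.1, fun h => ⟨h, hnd e h⟩⟩
  have hKG : SimpleGraph.fromEdgeSet (S : Set (Sym2 V)) ≤ G := by
    rw [← SimpleGraph.edgeSet_subset_edgeSet, hSE]
    exact hS
  have hcard := aux_span G _ T hKG hTS hr h0
  rw [hSE, Set.ncard_coe_finset, Set.ncard_eq_toFinset_card'] at hcard
  have hTsub : T.edgeSet.toFinset ⊆ S := by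
    intro e he
    have := SimpleGraph.edgeSet_mono hTS (Set.mem_toFinset.1 he)
    rw [hSE] at this
    exact this
  have hFsub : F' ⊆ T.edgeSet.toFinset := by
    intro e he
    rw [Set.mem_toFinset]
    apply SimpleGraph.edgeSet_mono hF'T
    rw [SimpleGraph.edgeSet_fromEdgeSet]
    exact ⟨he, hnd e (hS' (hF'S he))⟩
  refine ⟨T.edgeSet.toFinset, hTsub, by simpa [IsForestEdgeSet] using hT, ?_⟩
  have e1 : ∑ e ∈ S, (x e - t) = ∑ e ∈ S', (x e - t) := by
    symm
    apply Finset.sum_subset hS'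
    intro e he hne
    have h1 := hmin e he
    have : ¬ t < x e := fun h => hne (Finset.mem_filter.2 ⟨he, h⟩)
    linarith
  have e2 : ∑ e ∈ F', (x e - t) ≤ ∑ e ∈ T.edgeSet.toFinset, (x e - t) :=
    Finset.sum_le_sum_of_subset_of_nonneg hFsub fun e he _ => by
      have := hmin e (hTsub he)
      linarith
  have e3 := mul_le_mul_of_nonneg_left e2 h0
  have e4 := mul_le_mul_of_nonneg_left hcard htpos.le
  simp only [Finset.sum_sub_distrib, Finset.sum_const, nsmul_eq_mul] at e1 e2 e3 hle
  nlinarith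

/-- the core of the arboricity game is nonempty iff the fractional
arboricity equals the arboricity. -/
theorem core_nonempty_iff_fracArboricity_eq [Fintype V] (G : SimpleGraph V)
    (hG : G.Connected) :
    (∃ x : Sym2 V → ℝ, inCore G x) ↔
      fracArboricity G = (arboricity G.edgeSet : ℝ) := by
  classical
  constructor
  · rintro ⟨x, hx0, hxE, hxS⟩
    refine le_antisymm (aux_frac_le_arb G hG) ?_
    have h0 : 0 ≤ fracArboricity G := by
      obtain ⟨H, hH, hd⟩ := aux_frac_mem G hG
      rw [hd]
      exact aux_density_nonneg G H hH
    obtain ⟨F, hFS, hF, hle⟩ := aux_greedy G h0 _ x (G.edgeSet.toFinset.filter fun e => 0 < x e) rfl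
      (fun e he => by simpa using (Finset.mem_filter.1 he).1)
      (fun e he => (Finset.mem_filter.1 he).2)
    have hFE : (F : Set (Sym2 V)) ⊆ G.edgeSet := fun e he => by
      simpa using (Finset.mem_filter.1 (hFS he)).1
    have h1 := hxS F hFE
    rw [finsum_mem_coe_finset] at h1
    have h2 : (arboricity (F : Set (Sym2 V)) : ℝ) ≤ 1 := by exact_mod_cast aux_arb_forest _ hF
    rw [← hxE, finsum_mem_eq_toFinset_sum]
    have h3 : ∑ e ∈ G.edgeSet.toFinset.filter (fun e => 0 < x e), x e =
        ∑ e ∈ G.edgeSet.toFinset, x e := by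
      apply Finset.sum_subset (Finset.filter_subset _ _)
      intro e he hne
      have : ¬ 0 < x e := fun h => hne (Finset.mem_filter.2 ⟨he, h⟩)
      exact le_antisymm (not_lt.1 this) (hx0 e)
    rw [← h3]
    nlinarith [mul_le_mul_of_nonneg_left (h1.trans h2) h0]
  · intro heq
    obtain ⟨H, hH, hd⟩ := aux_frac_mem G hG
    have hp : (1 : ℝ) ≤ H.verts.ncard := by exact_mod_cast aux_verts_pos G H hH
    set w : ℝ := 1 / ((H.verts.ncard : ℝ) - 1) with hw
    have hw0 : 0 ≤ w := div_nonneg zero_le_one (by linarith)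
    have hsum : ∀ S : Set (Sym2 V), (∑ᶠ e ∈ S, (if e ∈ H.edgeSet then w else 0)) =
        (S ∩ H.edgeSet).ncard * w := by
      intro S
      rw [finsum_mem_eq_toFinset_sum, ← Finset.sum_filter, Finset.sum_const, nsmul_eq_mul,
        ← Set.ncard_coe_finset]
      congr 3
      ext e
      simp
    have hforest : ∀ F : Set (Sym2 V), IsForestEdgeSet F → (F ∩ H.edgeSet).ncard * w ≤ 1 := by
      intro F hF
      have h1 : ((F ∩ H.edgeSet).ncard : ℝ) + 1 ≤ H.verts.ncard := by
        exact_mod_cast aux_forest_card F hF G H hH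
      rw [hw, mul_one_div]
      exact div_le_one_of_le₀ (by linarith) (by linarith)
    refine ⟨fun e => if e ∈ H.edgeSet then w else 0, ?_, ?_, ?_⟩
    · intro e
      dsimp only
      split_ifs
      · exact hw0
      · exact le_rfl
    · rw [hsum, ← heq, hd, density, Set.inter_eq_right.2 H.edgeSet_subset, hw, mul_one_div]
    · intro S _
      rw [hsum]
      obtain ⟨F, hF, hc⟩ := aux_arb_spec S
      have h2 : S ∩ H.edgeSet ⊆ ⋃ i, (F i ∩ H.edgeSet) := by
        rw [← Set.iUnion_inter]
        exact Set.inter_subset_inter_left _ hc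
      have h3 : ((S ∩ H.edgeSet).ncard : ℝ) ≤ ∑ i, ((F i ∩ H.edgeSet).ncard : ℝ) := by
        exact_mod_cast (Set.ncard_le_ncard h2 (Set.toFinite _)).trans
          (Set.ncard_iUnion_le_of_fintype _)
      refine (mul_le_mul_of_nonneg_right h3 hw0).trans ?_
      rw [Finset.sum_mul]
      refine (Finset.sum_le_card_nsmul _ _ 1 fun i _ => hforest (F i) (hF i)).trans ?_
      simp
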